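/- Let N ≥ 1 and p, q ≥ 0 with pq > 1, and assume r₁* := (N/2)(pq−1)/(p+1) > 1 and r₂* := (N/2)(pq−1)/(q+1) > 1. Then there exists δ > 0 such that for all nonnegative measurable functions u₀, v₀ on ℝ^N with ‖u₀‖_{L^{r₁*,∞}(ℝ^N)} + ‖v₀‖_{L^{r₂*,∞}(ℝ^N)} < δ, the system (S) possesses a global-in-time solution (u,v) on ℝ^N × (0,∞); moreover there exist constants C > 0 and σ, r with 1 < σ ≤ r ≤ min{r₁*, r₂*} such that 0 ≤ u(x,t)^{r₁*} + v(x,t)^{r₂*} ≤ C [S(t)(u₀^{r₁*} + v₀^{r₂*})^{σ/r}](x)^{r/σ} for a.e. x ∈ ℝ^N and all t > 0. -/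

import Mathlib

open MeasureTheory ENNReal Filter

noncomputable section

/-- Euclidean space `ℝ^N`. -/
abbrev Euc (N : ℕ) := EuclideanSpace ℝ (Fin N)

/-- The heat semigroup applied to a (nonnegative) function `φ` on `ℝ^N`, with values in `[0,∞]`:
`[S(t)φ](x) = ∫ (4πt)^{-N/2} exp(-|x-y|²/(4t)) φ(y) dy`. -/
noncomputable def heatS (N : ℕ) (t : ℝ) (φ : Euc N → ℝ) (x : Euc N) : ℝ≥0∞ :=
  ∫⁻ y, ENNReal.ofReal
    ((4 * Real.pi * t) ^ (-(N : ℝ) / 2) * Real.exp (-‖x - y‖ ^ 2 / (4 * t)) * φ y)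

/-- The `L^∞` norm of `S(t)φ` on `ℝ^N`. -/
noncomputable def heatSup (N : ℕ) (t : ℝ) (φ : Euc N → ℝ) : ℝ≥0∞ :=
  essSup (heatS N t φ) volume

/-- The `L^{r,∞}(E)` quasinorm: for `1 < r < ∞` it is
`sup_{λ>0} λ |{x ∈ E : |f x| > λ}|^{1/r}`; for `r = 1` (resp. `r = ∞`)
it is the usual `L¹(E)` (resp. `L^∞(E)`) norm. -/
noncomputable def wnorm (N : ℕ) (r : ℝ≥0∞) (f : Euc N → ℝ) (E : Set (Euc N)) : ℝ≥0∞ :=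
  if r = 1 then ∫⁻ x in E, ENNReal.ofReal |f x|
  else if r = ⊤ then essSup (fun x => ENNReal.ofReal |f x|) (volume.restrict E)
  else ⨆ (l : ℝ) (_ : 0 < l), ENNReal.ofReal l * (volume {x ∈ E | l < |f x|}) ^ (1 / r.toReal)

/-- The uniformly local quasinorm `|||f|||_{r,ρ} = sup_x ‖f‖_{L^{r,∞}(B(x,ρ))}`
(for `r = ∞` it is the `L^∞(ℝ^N)` norm). -/
noncomputable def ulocNorm (N : ℕ) (r : ℝ≥0∞) (ρ : ℝ) (f : Euc N → ℝ) : ℝ≥0∞ :=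
  if r = ⊤ then essSup (fun x => ENNReal.ofReal |f x|) volume
  else ⨆ x : Euc N, wnorm N r f (Metric.ball x ρ)

/-- `u ∈ L^∞(τ, T-τ; L^∞(ℝ^N))` for every `τ ∈ (0, T/2)`. -/
def LocBdd (N : ℕ) (T : ℝ≥0∞) (u : Euc N → ℝ → ℝ) : Prop :=
  ∀ τ : ℝ, 0 < τ → ENNReal.ofReal (2 * τ) < T →
    ∃ M : ℝ, ∀ t : ℝ, τ ≤ t → ENNReal.ofReal (t + τ) ≤ T →
      ∀ᵐ x ∂(volume : Measure (Euc N)), |u x t| ≤ M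

/-- Regularity requirements on a pair `(u,v)`: nonnegativity, joint measurability and
uniform boundedness away from `t = 0` and `t = T`. -/
def PairRegular (N : ℕ) (T : ℝ≥0∞) (u v : Euc N → ℝ → ℝ) : Prop :=
  (∀ x t, 0 ≤ u x t) ∧ (∀ x t, 0 ≤ v x t) ∧
  Measurable (Function.uncurry u) ∧ Measurable (Function.uncurry v) ∧
  LocBdd N T u ∧ LocBdd N T v

/-- The Duhamel identities for the system (S) `∂ₜu = Δu + v^p`, `∂ₜv = Δv + u^q` at time `t`. -/
def DuhamelSys (N : ℕ) (p q : ℝ) (u₀ v₀ : Euc N → ℝ) (u v : Euc N → ℝ → ℝ) (t : ℝ) : Prop :=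
  (∀ᵐ x ∂(volume : Measure (Euc N)), ENNReal.ofReal (u x t) =
      heatS N t u₀ x + ∫⁻ s in Set.Ioo 0 t, heatS N (t - s) (fun y => v y s ^ p) x) ∧
  (∀ᵐ x ∂(volume : Measure (Euc N)), ENNReal.ofReal (v x t) =
      heatS N t v₀ x + ∫⁻ s in Set.Ioo 0 t, heatS N (t - s) (fun y => u y s ^ q) x)

/-- The Duhamel inequalities (`≥`, with finite left-hand side) for the system (S) at time `t`. -/
def DuhamelSuperSys (N : ℕ) (p q : ℝ) (u₀ v₀ : Euc N → ℝ) (u v : Euc N → ℝ → ℝ) (t : ℝ) : Prop :=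
  (∀ᵐ x ∂(volume : Measure (Euc N)),
      heatS N t u₀ x + (∫⁻ s in Set.Ioo 0 t, heatS N (t - s) (fun y => v y s ^ p) x) ≤
        ENNReal.ofReal (u x t)) ∧
  (∀ᵐ x ∂(volume : Measure (Euc N)),
      heatS N t v₀ x + (∫⁻ s in Set.Ioo 0 t, heatS N (t - s) (fun y => u y s ^ q) x) ≤
        ENNReal.ofReal (v x t))

/-- `(u,v)` is a solution of the system (S) on `ℝ^N × (0,T)`. -/
def IsSolSys (N : ℕ) (p q : ℝ) (u₀ v₀ : Euc N → ℝ) (T : ℝ≥0∞) (u v : Euc N → ℝ → ℝ) : Prop :=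
  PairRegular N T u v ∧
  ∀ t : ℝ, 0 < t → ENNReal.ofReal t < T → DuhamelSys N p q u₀ v₀ u v t

/-- `(u,v)` is a supersolution of the system (S) on `ℝ^N × (0,T)`. -/
def IsSuperSys (N : ℕ) (p q : ℝ) (u₀ v₀ : Euc N → ℝ) (T : ℝ≥0∞) (u v : Euc N → ℝ → ℝ) : Prop :=
  PairRegular N T u v ∧
  ∀ t : ℝ, 0 < t → ENNReal.ofReal t < T → DuhamelSuperSys N p q u₀ v₀ u v t

/-- `(u,v)` is the minimal solution of the system (S) on `ℝ^N × (0,T)`. -/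
def IsMinSolSys (N : ℕ) (p q : ℝ) (u₀ v₀ : Euc N → ℝ) (T : ℝ≥0∞)
    (u v : Euc N → ℝ → ℝ) : Prop :=
  IsSolSys N p q u₀ v₀ T u v ∧
  ∀ u' v' : Euc N → ℝ → ℝ, IsSolSys N p q u₀ v₀ T u' v' →
    ∀ t : ℝ, 0 < t → ENNReal.ofReal t < T →
      (∀ᵐ x ∂(volume : Measure (Euc N)), u x t ≤ u' x t) ∧
      (∀ᵐ x ∂(volume : Measure (Euc N)), v x t ≤ v' x t)

/-- Regularity requirements on a scalar function `w`. -/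
def ScalarRegular (N : ℕ) (T : ℝ≥0∞) (w : Euc N → ℝ → ℝ) : Prop :=
  (∀ x t, 0 ≤ w x t) ∧ Measurable (Function.uncurry w) ∧ LocBdd N T w

/-- The Duhamel identity for the scalar problem (E) `∂ₜw = Δw + α w^A + β w^B` at time `t`. -/
def DuhamelScalar (N : ℕ) (α β A B : ℝ) (w₀ : Euc N → ℝ) (w : Euc N → ℝ → ℝ) (t : ℝ) : Prop :=
  ∀ᵐ x ∂(volume : Measure (Euc N)), ENNReal.ofReal (w x t) =
    heatS N t w₀ x +
      ∫⁻ s in Set.Ioo 0 t, heatS N (t - s) (fun y => α * w y s ^ A + β * w y s ^ B) x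

/-- The Duhamel inequality (`≥`, with finite left-hand side) for the scalar problem (E). -/
def DuhamelSuperScalar (N : ℕ) (α β A B : ℝ) (w₀ : Euc N → ℝ) (w : Euc N → ℝ → ℝ)
    (t : ℝ) : Prop :=
  ∀ᵐ x ∂(volume : Measure (Euc N)),
    heatS N t w₀ x +
        (∫⁻ s in Set.Ioo 0 t, heatS N (t - s) (fun y => α * w y s ^ A + β * w y s ^ B) x) ≤
      ENNReal.ofReal (w x t)

/-- `w` is a solution of the scalar problem (E) on `ℝ^N × (0,T)`. -/
def IsSolScalar (N : ℕ) (α β A B : ℝ) (w₀ : Euc N → ℝ) (T : ℝ≥0∞)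
    (w : Euc N → ℝ → ℝ) : Prop :=
  ScalarRegular N T w ∧
  ∀ t : ℝ, 0 < t → ENNReal.ofReal t < T → DuhamelScalar N α β A B w₀ w t

/-- `w` is a supersolution of the scalar problem (E) on `ℝ^N × (0,T)`. -/
def IsSuperScalar (N : ℕ) (α β A B : ℝ) (w₀ : Euc N → ℝ) (T : ℝ≥0∞)
    (w : Euc N → ℝ → ℝ) : Prop :=
  ScalarRegular N T w ∧
  ∀ t : ℝ, 0 < t → ENNReal.ofReal t < T → DuhamelSuperScalar N α β A B w₀ w t

/-- The Duhamel identities for the strongly coupled system (SC)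
`∂ₜu = Δu + u^{p₁} v^{p₂}`, `∂ₜv = Δv + u^{q₁} v^{q₂}` at time `t`. -/
def DuhamelSC (N : ℕ) (p₁ p₂ q₁ q₂ : ℝ) (u₀ v₀ : Euc N → ℝ) (u v : Euc N → ℝ → ℝ)
    (t : ℝ) : Prop :=
  (∀ᵐ x ∂(volume : Measure (Euc N)), ENNReal.ofReal (u x t) =
      heatS N t u₀ x +
        ∫⁻ s in Set.Ioo 0 t, heatS N (t - s) (fun y => u y s ^ p₁ * v y s ^ p₂) x) ∧
  (∀ᵐ x ∂(volume : Measure (Euc N)), ENNReal.ofReal (v x t) =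
      heatS N t v₀ x +
        ∫⁻ s in Set.Ioo 0 t, heatS N (t - s) (fun y => u y s ^ q₁ * v y s ^ q₂) x)

/-- `(u,v)` is a solution of the strongly coupled system (SC) on `ℝ^N × (0,T)`. -/
def IsSolSC (N : ℕ) (p₁ p₂ q₁ q₂ : ℝ) (u₀ v₀ : Euc N → ℝ) (T : ℝ≥0∞)
    (u v : Euc N → ℝ → ℝ) : Prop :=
  PairRegular N T u v ∧
  ∀ t : ℝ, 0 < t → ENNReal.ofReal t < T → DuhamelSC N p₁ p₂ q₁ q₂ u₀ v₀ u v t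

/-!
Both components are dominated by powers of a single heat flow. With `z = (u₀^r₁ + v₀^r₂)^θ` for
some `θ < 1` with `r₁ θ, r₂ θ > 1`, smallness of the weak Lebesgue norms gives
`S(t)z ≤ B t^{-m}`, where `m = N θ / 2` and `B` is small. For `a_i = 1 / (r_i θ) < 1` the nonlinear
terms produce the powers `(S(s)z)^{a_i + 1/m}`. The decay estimate trades the excess exponent for
an integrable power of `s`, and Jensen's inequality with the semigroup law removes `S(t - s)`, so
the Duhamel integral is at most a small multiple of `(S(t)z)^{a_i}`. Therefore
`(2 (S(t)z)^{a₁}, 2 (S(t)z)^{a₂})` is a supersolution, and monotone iteration from `0` converges to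
a solution below it.
-/

/-! ### Powers in integrals -/

lemma ofReal_two_rpow (r : ℝ) : ENNReal.ofReal (2 ^ r) = 2 ^ r := by
  rw [← ENNReal.ofReal_rpow_of_pos two_pos, ENNReal.ofReal_ofNat]

lemma setLIntegral_Ioo_rpow {a A : ℝ} (ha : -1 < a) (hA : 0 ≤ A) :
    ∫⁻ s in Set.Ioo 0 A, ENNReal.ofReal (s ^ a) = ENNReal.ofReal (A ^ (a + 1) / (a + 1)) := by
  have hnonneg : 0 ≤ᵐ[volume.restrict (Set.Ioc 0 A)] fun s : ℝ => s ^ a :=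
    (ae_restrict_iff' measurableSet_Ioc).2 (.of_forall fun s hs => Real.rpow_nonneg hs.1.le a)
  have hint : IntegrableOn (fun s : ℝ => s ^ a) (Set.Ioc 0 A) :=
    (intervalIntegrable_iff_integrableOn_Ioc_of_le hA).1
      (intervalIntegral.intervalIntegrable_rpow' ha)
  rw [restrict_Ioo_eq_restrict_Ioc, ← ofReal_integral_eq_lintegral_ofReal hint hnonneg,
    ← intervalIntegral.integral_of_le hA, integral_rpow (Or.inl ha),
    Real.zero_rpow (by linarith), sub_zero]

lemma setLIntegral_Ioi_rpow {a A : ℝ} (ha : a < -1) (hA : 0 < A) :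
    ∫⁻ s in Set.Ioi A, ENNReal.ofReal (s ^ a) = ENNReal.ofReal (-A ^ (a + 1) / (a + 1)) := by
  have hnonneg : 0 ≤ᵐ[volume.restrict (Set.Ioi A)] fun s : ℝ => s ^ a :=
    (ae_restrict_iff' measurableSet_Ioi).2
      (.of_forall fun s hs => Real.rpow_nonneg (hA.trans hs).le a)
  rw [← ofReal_integral_eq_lintegral_ofReal (integrableOn_Ioi_rpow_of_lt ha hA) hnonneg,
    integral_Ioi_rpow_of_lt ha hA]

section ProbabilityMeasure

variable {α : Type*} [MeasurableSpace α] {μ : Measure α} [IsProbabilityMeasure μ]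

lemma lintegral_rpow_le_rpow_lintegral {f : α → ℝ≥0∞} (hf : AEMeasurable f μ) {e : ℝ}
    (he : 0 < e) (he1 : e ≤ 1) : ∫⁻ y, f y ^ e ∂μ ≤ (∫⁻ y, f y ∂μ) ^ e := by
  have h := eLpNorm'_le_eLpNorm'_of_exponent_le he he1 μ hf.aestronglyMeasurable
  simp only [eLpNorm', enorm_eq_self, ENNReal.rpow_one, div_one] at h
  rwa [one_div, ENNReal.rpow_inv_le_iff he] at h

-- Layer cake: below the threshold `A` the tail is at most `1`, above it at most `A / l`.
lemma lintegral_rpow_le_of_weak_tail {f : α → ℝ} (hf : AEMeasurable f μ) (hf0 : 0 ≤ᵐ[μ] f)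
    {θ A : ℝ} (hθ : 0 < θ) (hθ1 : θ < 1) (hA : 0 < A)
    (htail : ∀ l : ℝ, 0 < l → μ {y | l < f y} ≤ ENNReal.ofReal (A / l)) :
    ∫⁻ y, ENNReal.ofReal (f y ^ θ) ∂μ ≤ ENNReal.ofReal (A ^ θ / (1 - θ)) := by
  have h1θ : 0 < 1 - θ := by linarith
  have low : ∫⁻ l in Set.Ioc 0 A, μ {y | l < f y} * ENNReal.ofReal (l ^ (θ - 1)) ≤
      ENNReal.ofReal (A ^ θ / θ) := by
    calc ∫⁻ l in Set.Ioc 0 A, μ {y | l < f y} * ENNReal.ofReal (l ^ (θ - 1))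
        ≤ ∫⁻ l in Set.Ioc 0 A, ENNReal.ofReal (l ^ (θ - 1)) :=
          lintegral_mono fun l => mul_le_of_le_one_left' prob_le_one
      _ = ENNReal.ofReal (A ^ θ / θ) := by
          rw [← restrict_Ioo_eq_restrict_Ioc, setLIntegral_Ioo_rpow (by linarith) hA.le,
            sub_add_cancel]
  have high : ∫⁻ l in Set.Ioi A, μ {y | l < f y} * ENNReal.ofReal (l ^ (θ - 1)) ≤
      ENNReal.ofReal (A ^ θ / (1 - θ)) := by
    have integrand_le : ∀ l ∈ Set.Ioi A, μ {y | l < f y} * ENNReal.ofReal (l ^ (θ - 1)) ≤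
        ENNReal.ofReal A * ENNReal.ofReal (l ^ (θ - 2)) := fun l hl => by
      have hl0 : 0 < l := hA.trans hl
      have hpow : A / l * l ^ (θ - 1) = A * l ^ (θ - 2) := by
        rw [show θ - 1 = θ - 2 + 1 by ring, Real.rpow_add_one hl0.ne']
        field_simp
      grw [htail l hl0, ← ENNReal.ofReal_mul (by positivity), hpow, ENNReal.ofReal_mul hA.le]
    calc ∫⁻ l in Set.Ioi A, μ {y | l < f y} * ENNReal.ofReal (l ^ (θ - 1))
        ≤ ∫⁻ l in Set.Ioi A, ENNReal.ofReal A * ENNReal.ofReal (l ^ (θ - 2)) :=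
          setLIntegral_mono (by fun_prop) integrand_le
      _ = ENNReal.ofReal (A * (-A ^ (θ - 2 + 1) / (θ - 2 + 1))) := by
          rw [lintegral_const_mul _ (by fun_prop), setLIntegral_Ioi_rpow (by linarith) hA,
            ← ENNReal.ofReal_mul hA.le]
      _ = ENNReal.ofReal (A ^ θ / (1 - θ)) := by
          rw [show θ - 2 + 1 = -(1 - θ) by ring, neg_div_neg_eq, mul_div_assoc', neg_sub,
            Real.rpow_sub_one hA.ne', mul_div_cancel₀ _ hA.ne']
  calc ∫⁻ y, ENNReal.ofReal (f y ^ θ) ∂μ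
      = ENNReal.ofReal θ *
          ∫⁻ l in Set.Ioc 0 A ∪ Set.Ioi A, μ {y | l < f y} * ENNReal.ofReal (l ^ (θ - 1)) := by
        rw [lintegral_rpow_eq_lintegral_meas_lt_mul μ hf0 hf hθ, Set.Ioc_union_Ioi_eq_Ioi hA.le]
    _ ≤ ENNReal.ofReal θ * (ENNReal.ofReal (A ^ θ / θ) + ENNReal.ofReal (A ^ θ / (1 - θ))) := by
        grw [lintegral_union_le, low, high]
    _ = ENNReal.ofReal (A ^ θ / (1 - θ)) := by
        rw [← ENNReal.ofReal_add (by positivity) (by positivity), ← ENNReal.ofReal_mul hθ.le]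
        congr 1
        field_simp
        ring

end ProbabilityMeasure

/-! ### The heat semigroup -/

section HeatSemigroup

variable {E : Type*} [NormedAddCommGroup E] [InnerProductSpace ℝ E]

local notation "dim" => (Module.finrank ℝ E : ℝ)

lemma norm_sq_div_add_norm_sq_div {a b : ℝ} (ha : 0 < a) (hb : 0 < b) (x y : E) :
    ‖x‖ ^ 2 / a + ‖y‖ ^ 2 / b =
      ‖x + y‖ ^ 2 / (a + b) + ‖b • x - a • y‖ ^ 2 / (a * b * (a + b)) := by
  rw [norm_add_sq_real, norm_sub_sq_real, norm_smul, norm_smul, real_inner_smul_left,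
    real_inner_smul_right, Real.norm_of_nonneg ha.le, Real.norm_of_nonneg hb.le]
  field_simp
  ring

/-- The Gauss–Weierstrass kernel `(4πt)^{-dim E / 2} exp(-|x|² / 4t)` of the heat equation on `E`,
extended by `0` to times `t ≤ 0`, so that inequalities between heat flows need no sign condition
on the time. -/
def heatKernel (t : ℝ) (x : E) : ℝ≥0∞ :=
  if 0 < t then
    ENNReal.ofReal ((4 * Real.pi * t) ^ (-dim / 2) * Real.exp (-‖x‖ ^ 2 / (4 * t)))
  else 0

lemma heatKernel_ne_top (t : ℝ) (x : E) : heatKernel t x ≠ ⊤ := by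
  unfold heatKernel
  split_ifs <;> simp

lemma heatKernel_le {t : ℝ} (ht : 0 < t) (x : E) :
    heatKernel t x ≤ ENNReal.ofReal ((4 * Real.pi * t) ^ (-dim / 2)) := by
  rw [heatKernel, if_pos ht]
  refine ENNReal.ofReal_le_ofReal (mul_le_of_le_one_right (by positivity) ?_)
  rw [Real.exp_le_one_iff, neg_div]
  exact neg_nonpos.2 (by positivity)

-- Completing the square: the product of the kernels is a Gaussian centred at a point between
-- `x` and `y`, weighted by the kernel of the total time.
lemma heatKernel_mul_heatKernel {a b : ℝ} (ha : 0 < a) (hb : 0 < b) (x y z : E) :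
    heatKernel a (x - z) * heatKernel b (z - y) =
      ENNReal.ofReal (((4 * Real.pi * a) * (4 * Real.pi * b)) ^ (-dim / 2) *
        Real.exp (-‖x - y‖ ^ 2 / (4 * (a + b)))) *
      ENNReal.ofReal (Real.exp (-((a + b) / (4 * a * b)) *
        ‖z - (a + b)⁻¹ • (b • x + a • y)‖ ^ 2)) := by
  have hab : 0 < a + b := by positivity
  have hcentre : b • (x - z) - a • (z - y) =
      (-(a + b)) • (z - (a + b)⁻¹ • (b • x + a • y)) := by
    rw [neg_smul, smul_sub (a + b), smul_inv_smul₀ hab.ne']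
    module
  have hsquare := norm_sq_div_add_norm_sq_div ha hb (x - z) (z - y)
  rw [sub_add_sub_cancel, hcentre, norm_smul, norm_neg, Real.norm_of_nonneg hab.le] at hsquare
  have hexp : -‖x - z‖ ^ 2 / (4 * a) + -‖z - y‖ ^ 2 / (4 * b) = -‖x - y‖ ^ 2 / (4 * (a + b)) +
      -((a + b) / (4 * a * b)) * ‖z - (a + b)⁻¹ • (b • x + a • y)‖ ^ 2 := by
    calc -‖x - z‖ ^ 2 / (4 * a) + -‖z - y‖ ^ 2 / (4 * b)
        = -(‖x - z‖ ^ 2 / a + ‖z - y‖ ^ 2 / b) / 4 := by ring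
      _ = _ := by
          rw [hsquare]
          field_simp
          ring
  rw [heatKernel, heatKernel, if_pos ha, if_pos hb, ← ENNReal.ofReal_mul (by positivity),
    ← ENNReal.ofReal_mul (by positivity), mul_mul_mul_comm, ← Real.exp_add, hexp, Real.exp_add,
    ← Real.mul_rpow (by positivity) (by positivity), mul_assoc (_ ^ (-dim / 2))]

variable [MeasurableSpace E] [BorelSpace E]

lemma measurable_heatKernel : Measurable fun z : ℝ × E => heatKernel z.1 z.2 := by
  unfold heatKernel
  exact Measurable.ite (measurableSet_lt measurable_const measurable_fst) (by fun_prop)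
    measurable_const

@[fun_prop]
lemma measurable_heatKernel_comp {α : Type*} [MeasurableSpace α] {τ : α → ℝ} {ξ : α → E}
    (hτ : Measurable τ) (hξ : Measurable ξ) : Measurable fun a => heatKernel (τ a) (ξ a) :=
  measurable_heatKernel.comp (hτ.prodMk hξ)

variable [FiniteDimensional ℝ E]

lemma lintegral_exp_neg_mul_norm_sub_sq {b : ℝ} (hb : 0 < b) (c : E) :
    ∫⁻ y : E, ENNReal.ofReal (Real.exp (-b * ‖y - c‖ ^ 2)) =
      ENNReal.ofReal ((b / Real.pi) ^ (-dim / 2)) := by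
  have hint := GaussianFourier.integral_rexp_neg_mul_sq_norm (V := E) hb
  have hintegrable : Integrable fun y : E => Real.exp (-b * ‖y‖ ^ 2) :=
    .of_integral_ne_zero (by rw [hint]; positivity)
  rw [lintegral_sub_right_eq_self (fun y : E => ENNReal.ofReal (Real.exp (-b * ‖y‖ ^ 2))) c,
    ← ofReal_integral_eq_lintegral_ofReal hintegrable (.of_forall fun y => (Real.exp_pos _).le),
    hint, neg_div, Real.rpow_neg (by positivity), ← Real.inv_rpow (by positivity), inv_div]

lemma lintegral_heatKernel_sub {t : ℝ} (ht : 0 < t) (x : E) : ∫⁻ y, heatKernel t (x - y) = 1 := by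
  have hgauss : ∀ y, heatKernel t (x - y) = ENNReal.ofReal ((4 * Real.pi * t) ^ (-dim / 2)) *
      ENNReal.ofReal (Real.exp (-(1 / (4 * t)) * ‖y - x‖ ^ 2)) := fun y => by
    rw [heatKernel, if_pos ht, ENNReal.ofReal_mul (by positivity), norm_sub_rev]
    ring_nf
  simp_rw [hgauss]
  rw [lintegral_const_mul _ (by fun_prop), lintegral_exp_neg_mul_norm_sub_sq (by positivity),
    ← ENNReal.ofReal_mul (by positivity), ← Real.mul_rpow (by positivity) (by positivity)]
  have : 4 * Real.pi * t * (1 / (4 * t) / Real.pi) = 1 := by field_simp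
  rw [this, Real.one_rpow, ENNReal.ofReal_one]

lemma lintegral_heatKernel_mul_heatKernel {a b : ℝ} (ha : 0 < a) (hb : 0 < b) (x y : E) :
    ∫⁻ z, heatKernel a (x - z) * heatKernel b (z - y) = heatKernel (a + b) (x - y) := by
  have hconst : (4 * Real.pi * a) * (4 * Real.pi * b) * ((a + b) / (4 * a * b) / Real.pi) =
      4 * Real.pi * (a + b) := by field_simp
  simp_rw [heatKernel_mul_heatKernel ha hb]
  rw [lintegral_const_mul _ (by fun_prop), lintegral_exp_neg_mul_norm_sub_sq (by positivity),
    ← ENNReal.ofReal_mul (by positivity), mul_right_comm,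
    ← Real.mul_rpow (by positivity) (by positivity), hconst, heatKernel, if_pos (add_pos ha hb)]

/-- The distribution at time `t` of heat released at the point `x` at time `0`. -/
def heatMeasure (t : ℝ) (x : E) : Measure E :=
  volume.withDensity fun y => heatKernel t (x - y)

/-- The heat semigroup `S(t)` acting on `[0,∞]`-valued functions; it vanishes for `t ≤ 0`. -/
def heatFlow (t : ℝ) (f : E → ℝ≥0∞) (x : E) : ℝ≥0∞ :=
  ∫⁻ y, f y ∂heatMeasure t x

lemma isProbabilityMeasure_heatMeasure {t : ℝ} (ht : 0 < t) (x : E) :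
    IsProbabilityMeasure (heatMeasure t x) :=
  ⟨by rw [heatMeasure, withDensity_apply _ .univ, Measure.restrict_univ,
    lintegral_heatKernel_sub ht]⟩

lemma heatMeasure_le_smul_volume {t : ℝ} (ht : 0 < t) (x : E) :
    heatMeasure t x ≤ ENNReal.ofReal ((4 * Real.pi * t) ^ (-dim / 2)) • volume := by
  rw [← withDensity_const]
  exact withDensity_mono (.of_forall fun y => heatKernel_le ht (x - y))

lemma heatFlow_eq_lintegral_mul (t : ℝ) (f : E → ℝ≥0∞) (x : E) :
    heatFlow t f x = ∫⁻ y, heatKernel t (x - y) * f y :=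
  lintegral_withDensity_eq_lintegral_mul_non_measurable _ (by fun_prop)
    (.of_forall fun y => (heatKernel_ne_top t (x - y)).lt_top) f

lemma heatFlow_of_nonpos {t : ℝ} (ht : t ≤ 0) (f : E → ℝ≥0∞) (x : E) : heatFlow t f x = 0 := by
  simp [heatFlow_eq_lintegral_mul, heatKernel, ht.not_gt]

lemma measurable_heatFlow {α : Type*} [MeasurableSpace α] {τ : α → ℝ} {f : α → E → ℝ≥0∞}
    {ξ : α → E} (hτ : Measurable τ) (hf : Measurable (Function.uncurry f)) (hξ : Measurable ξ) :
    Measurable fun a => heatFlow (τ a) (f a) (ξ a) := by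
  simp only [heatFlow_eq_lintegral_mul]
  exact Measurable.lintegral_prod_right'
    (f := fun w : α × E => heatKernel (τ w.1) (ξ w.1 - w.2) * f w.1 w.2) (by fun_prop)

@[gcongr]
lemma heatFlow_mono {t : ℝ} {f g : E → ℝ≥0∞} {x : E} (h : ∀ y, f y ≤ g y) :
    heatFlow t f x ≤ heatFlow t g x :=
  lintegral_mono h

lemma heatFlow_heatFlow {a b : ℝ} (ha : 0 < a) (hb : 0 < b) {f : E → ℝ≥0∞} (hf : Measurable f)
    (x : E) : heatFlow a (heatFlow b f) x = heatFlow (a + b) f x := by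
  simp only [heatFlow_eq_lintegral_mul]
  calc ∫⁻ z, heatKernel a (x - z) * ∫⁻ y, heatKernel b (z - y) * f y
      = ∫⁻ z, ∫⁻ y, heatKernel a (x - z) * heatKernel b (z - y) * f y := by
        simp_rw [mul_assoc]
        exact lintegral_congr fun z => (lintegral_const_mul _ (by fun_prop)).symm
    _ = ∫⁻ y, ∫⁻ z, heatKernel a (x - z) * heatKernel b (z - y) * f y :=
        lintegral_lintegral_swap (by fun_prop)
    _ = ∫⁻ y, heatKernel (a + b) (x - y) * f y := lintegral_congr fun y => by
        rw [lintegral_mul_const _ (by fun_prop), lintegral_heatKernel_mul_heatKernel ha hb]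

lemma heatFlow_rpow_heatFlow_le {s t : ℝ} (hs : 0 < s) (hst : s < t) {f : E → ℝ≥0∞}
    (hf : Measurable f) {e : ℝ} (he : 0 < e) (he1 : e ≤ 1) (x : E) :
    heatFlow (t - s) (fun y => heatFlow s f y ^ e) x ≤ heatFlow t f x ^ e := by
  have hts : 0 < t - s := sub_pos.2 hst
  have := isProbabilityMeasure_heatMeasure hts x
  have hmeas : Measurable (heatFlow s f) :=
    measurable_heatFlow measurable_const (hf.comp measurable_snd) measurable_id
  calc heatFlow (t - s) (fun y => heatFlow s f y ^ e) x
      ≤ heatFlow (t - s) (heatFlow s f) x ^ e :=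
        lintegral_rpow_le_rpow_lintegral hmeas.aemeasurable he he1
    _ = heatFlow t f x ^ e := by rw [heatFlow_heatFlow hts hs hf, sub_add_cancel]


/-! ### Decay of the heat flow and Duhamel integrals of its powers -/

/-- The heat flow of `z` decays in sup norm at the rate `t^{-m}`, with constant `B`. -/
def HeatFlowDecay (m B : ℝ) (z : E → ℝ≥0∞) : Prop :=
  ∀ t, 0 < t → ∀ x, heatFlow t z x ≤ ENNReal.ofReal (B * t ^ (-m))

lemma heatFlowDecay_of_weak_tail {w : E → ℝ} (hw : Measurable w) (hw0 : ∀ y, 0 ≤ w y)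
    {θ κ : ℝ} (hθ : 0 < θ) (hθ1 : θ < 1) (hκ : 0 < κ)
    (htail : ∀ l : ℝ, 0 < l → volume {y | l < w y} ≤ ENNReal.ofReal (κ / l)) :
    HeatFlowDecay (dim * θ / 2) (((4 * Real.pi) ^ (-dim / 2) * κ) ^ θ / (1 - θ))
      fun y => ENNReal.ofReal (w y ^ θ) := fun t ht x => by
  have := isProbabilityMeasure_heatMeasure ht x
  have hscale : ((4 * Real.pi * t) ^ (-dim / 2) * κ) ^ θ / (1 - θ) =
      ((4 * Real.pi) ^ (-dim / 2) * κ) ^ θ / (1 - θ) * t ^ (-(dim * θ / 2)) := by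
    rw [Real.mul_rpow (by positivity) ht.le, mul_right_comm, Real.mul_rpow (by positivity)
      (by positivity), ← Real.rpow_mul ht.le, mul_div_right_comm]
    ring_nf
  rw [← hscale]
  refine lintegral_rpow_le_of_weak_tail hw.aemeasurable (.of_forall hw0) hθ hθ1 (by positivity)
    fun l hl => ?_
  grw [heatMeasure_le_smul_volume ht x, Measure.smul_apply, smul_eq_mul, htail l hl,
    ← ENNReal.ofReal_mul (by positivity), mul_div_assoc]

namespace HeatFlowDecay

variable {m B : ℝ} {z : E → ℝ≥0∞}

lemma mono {B' : ℝ} (h : HeatFlowDecay m B z) (hB : B ≤ B') : HeatFlowDecay m B' z :=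
  fun t ht x => (h t ht x).trans (ENNReal.ofReal_le_ofReal (by gcongr))

lemma heatFlow_rpow_le (h : HeatFlowDecay m B z) (hB : 0 ≤ B) {e b : ℝ} (he : 0 ≤ e)
    (heb : e ≤ b) {t : ℝ} (ht : 0 < t) (x : E) :
    heatFlow t z x ^ b ≤
      ENNReal.ofReal (B ^ (b - e) * t ^ (-(m * (b - e)))) * heatFlow t z x ^ e := by
  have hbe : 0 ≤ b - e := sub_nonneg.2 heb
  calc heatFlow t z x ^ b = heatFlow t z x ^ (b - e) * heatFlow t z x ^ e := by
        rw [← ENNReal.rpow_add_of_nonneg _ _ hbe he, sub_add_cancel]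
    _ ≤ ENNReal.ofReal (B * t ^ (-m)) ^ (b - e) * heatFlow t z x ^ e := by
        gcongr
        exact h t ht x
    _ = ENNReal.ofReal (B ^ (b - e) * t ^ (-(m * (b - e)))) * heatFlow t z x ^ e := by
        rw [ENNReal.ofReal_rpow_of_nonneg (by positivity) hbe, Real.mul_rpow hB (by positivity),
          ← Real.rpow_mul ht.le, neg_mul]

lemma heatFlow_sub_rpow_heatFlow_le (h : HeatFlowDecay m B z) (hB : 0 ≤ B) (hz : Measurable z)
    {e b : ℝ} (he : 0 < e) (he1 : e ≤ 1) (heb : e ≤ b) {s t : ℝ} (hs : 0 < s) (hst : s < t)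
    (x : E) :
    heatFlow (t - s) (fun y => heatFlow s z y ^ b) x ≤
      ENNReal.ofReal (B ^ (b - e) * s ^ (-(m * (b - e)))) * heatFlow t z x ^ e := by
  grw [← heatFlow_rpow_heatFlow_le hs hst hz he he1 x, heatFlow_mono fun y =>
    h.heatFlow_rpow_le hB he.le heb hs y]
  exact (lintegral_const_mul' _ _ ENNReal.ofReal_ne_top).le

lemma setLIntegral_heatFlow_sub_rpow_heatFlow_le (h : HeatFlowDecay m B z) (hB : 0 ≤ B)
    (hz : Measurable z) (hm : 0 < m) {a e : ℝ} (ha : 0 ≤ a) (hae : a < e) (he1 : e ≤ 1)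
    (hem : e ≤ a + 1 / m) {t : ℝ} (ht : 0 < t) (x : E) :
    ∫⁻ s in Set.Ioo 0 t, heatFlow (t - s) (fun y => heatFlow s z y ^ (a + 1 / m)) x ≤
      ENNReal.ofReal (B ^ (1 / m) / (m * (e - a))) * heatFlow t z x ^ a := by
  set b := a + 1 / m
  have hc : 0 < m * (e - a) := mul_pos hm (sub_pos.2 hae)
  have htime : -(m * (b - e)) + 1 = m * (e - a) := by
    simp only [b]
    field_simp
    ring
  have hconst : B ^ (b - e) * (t ^ (m * (e - a)) / (m * (e - a))) *
      (B ^ (e - a) * t ^ (-(m * (e - a)))) = B ^ (1 / m) / (m * (e - a)) := by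
    rw [show 1 / m = (b - e) + (e - a) by simp only [b]; ring,
      Real.rpow_add_of_nonneg hB (by linarith) (by linarith), Real.rpow_neg ht.le]
    field_simp
  calc ∫⁻ s in Set.Ioo 0 t, heatFlow (t - s) (fun y => heatFlow s z y ^ b) x
      ≤ ∫⁻ s in Set.Ioo 0 t,
          ENNReal.ofReal (B ^ (b - e) * s ^ (-(m * (b - e)))) * heatFlow t z x ^ e :=
        setLIntegral_mono (by fun_prop) fun s hs =>
          h.heatFlow_sub_rpow_heatFlow_le hB hz (ha.trans_lt hae) he1 hem hs.1 hs.2 x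
    _ = ENNReal.ofReal (B ^ (b - e) * (t ^ (m * (e - a)) / (m * (e - a)))) *
          heatFlow t z x ^ e := by
        simp_rw [ENNReal.ofReal_mul (Real.rpow_nonneg hB (b - e))]
        rw [lintegral_mul_const _ (by fun_prop), lintegral_const_mul _ (by fun_prop),
          setLIntegral_Ioo_rpow (by linarith) ht.le, htime]
    _ ≤ ENNReal.ofReal (B ^ (1 / m) / (m * (e - a))) * heatFlow t z x ^ a := by
        grw [h.heatFlow_rpow_le hB ha hae.le ht x, ← mul_assoc,
          ← ENNReal.ofReal_mul (by positivity), hconst]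

end HeatFlowDecay

/-! ### The Duhamel map and monotone iteration -/

/-- The right-hand side `S(t)f₀ + ∫₀ᵗ S(t-s) g(s)^p ds` of Duhamel's formula for the equation
`∂ₜf = Δf + g^p` with initial datum `f₀`. -/
def duhamel (f₀ : E → ℝ≥0∞) (p : ℝ) (g : E → ℝ → ℝ≥0∞) (x : E) (t : ℝ) : ℝ≥0∞ :=
  heatFlow t f₀ x + ∫⁻ s in Set.Ioo 0 t, heatFlow (t - s) (fun y => g y s ^ p) x

lemma setLIntegral_Ioo_heatFlow_sub (g : ℝ → E → ℝ≥0∞) (x : E) (t : ℝ) :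
    ∫⁻ s in Set.Ioo 0 t, heatFlow (t - s) (g s) x =
      ∫⁻ s in Set.Ioi 0, heatFlow (t - s) (g s) x := by
  rw [← Set.Iio_inter_Ioi, ← setLIntegral_indicator measurableSet_Iio]
  refine lintegral_congr fun s => ?_
  rw [Set.indicator_eq_self.2]
  intro s hs
  by_contra hst
  exact hs (heatFlow_of_nonpos (sub_nonpos.2 (not_lt.1 hst)) _ _)

lemma measurable_duhamel {f₀ : E → ℝ≥0∞} (hf₀ : Measurable f₀) (p : ℝ) {g : E → ℝ → ℝ≥0∞}
    (hg : Measurable (Function.uncurry g)) : Measurable (Function.uncurry (duhamel f₀ p g)) := by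
  have hgp : Measurable fun w : ((E × ℝ) × ℝ) × E => g w.2 w.1.2 ^ p :=
    (hg.comp (measurable_snd.prodMk measurable_fst.snd)).pow_const p
  unfold duhamel
  simp only [setLIntegral_Ioo_heatFlow_sub]
  exact (measurable_heatFlow (f := fun _ => f₀) measurable_snd (hf₀.comp measurable_snd)
    measurable_fst).add (Measurable.lintegral_prod_right' (measurable_heatFlow
      (f := fun (w : (E × ℝ) × ℝ) y => g y w.2 ^ p) (measurable_fst.snd.sub measurable_snd) hgp
      measurable_fst.fst))

lemma duhamel_mono (f₀ : E → ℝ≥0∞) {p : ℝ} (hp : 0 ≤ p) : Monotone (duhamel f₀ p) :=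
  fun g g' hg x t => by
    unfold duhamel
    gcongr with s y
    exact hg y s

lemma duhamel_iSup (f₀ : E → ℝ≥0∞) {p : ℝ} (hp : 0 < p) {g : ℕ → E → ℝ → ℝ≥0∞}
    (hg : ∀ n, Measurable (Function.uncurry (g n))) (hmono : Monotone g) :
    duhamel f₀ p (⨆ n, g n) = ⨆ n, duhamel f₀ p (g n) := by
  have hpow : ∀ n s, Measurable fun y => g n y s ^ p := fun n s => by
    have := hg n
    fun_prop
  have hpow_mono : ∀ s, Monotone fun n y => g n y s ^ p := fun s i j hij y =>
    ENNReal.rpow_le_rpow (hmono hij y s) hp.le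
  have hflow : ∀ t s x, heatFlow (t - s) (fun y => (⨆ n, g n y s) ^ p) x =
      ⨆ n, heatFlow (t - s) (fun y => g n y s ^ p) x := fun t s x => by
    simp_rw [heatFlow, ← lintegral_iSup (hpow · s) (hpow_mono s)]
    exact lintegral_congr fun y => (ENNReal.orderIsoRpow p hp).map_iSup _
  ext x t
  simp only [duhamel, iSup_apply, hflow]
  rw [lintegral_iSup, ENNReal.add_iSup]
  · intro n
    have := hg n
    exact measurable_heatFlow (f := fun s y => g n y s ^ p) (by fun_prop) (by fun_prop)
      (by fun_prop)
  · exact fun i j hij s => heatFlow_mono (hpow_mono s hij)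


-- Kleene iteration from `⊥`, for a map that is continuous only along sequences satisfying `P`
-- (measurability, in the application).
lemma exists_fixedPt_le_of_map_le {L : Type*} [CompleteLattice L] {Φ : L → L} (hΦ : Monotone Φ)
    {P : L → Prop} (hbot : P ⊥) (hmap : ∀ w, P w → P (Φ w))
    (hiSup : ∀ w : ℕ → L, Monotone w → (∀ n, P (w n)) →
      P (⨆ n, w n) ∧ Φ (⨆ n, w n) = ⨆ n, Φ (w n))
    {W : L} (hW : Φ W ≤ W) : ∃ w ≤ W, P w ∧ Φ w = w := by
  set iter : ℕ → L := fun n => Φ^[n] ⊥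
  have iter_succ : ∀ n, iter (n + 1) = Φ (iter n) := fun n => Function.iterate_succ_apply' Φ n ⊥
  have iter_mono : Monotone iter := hΦ.monotone_iterate_of_le_map bot_le
  have iter_P : ∀ n, P (iter n) := fun n => by
    induction n with
    | zero => exact hbot
    | succ n ih => exact iter_succ n ▸ hmap _ ih
  have iter_le : ∀ n, iter n ≤ W := fun n => by
    induction n with
    | zero => exact bot_le
    | succ n ih => exact iter_succ n ▸ (hΦ ih).trans hW
  obtain ⟨hP, hcont⟩ := hiSup iter iter_mono iter_P
  refine ⟨⨆ n, iter n, iSup_le iter_le, hP, ?_⟩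
  simp_rw [hcont, ← iter_succ, iter_mono.iSup_nat_add 1]

lemma exists_duhamel_eq_le {p q : ℝ} (hp : 0 < p) (hq : 0 < q) {f₀ g₀ : E → ℝ≥0∞}
    (hf₀ : Measurable f₀) (hg₀ : Measurable g₀) {U V : E → ℝ → ℝ≥0∞}
    (hU : duhamel f₀ p V ≤ U) (hV : duhamel g₀ q U ≤ V) :
    ∃ u v : E → ℝ → ℝ≥0∞, u ≤ U ∧ v ≤ V ∧
      Measurable (Function.uncurry u) ∧ Measurable (Function.uncurry v) ∧
      duhamel f₀ p v = u ∧ duhamel g₀ q u = v := by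
  obtain ⟨⟨u, v⟩, hle, ⟨hu, hv⟩, hfix⟩ := exists_fixedPt_le_of_map_le
    (Φ := fun w : (E → ℝ → ℝ≥0∞) × (E → ℝ → ℝ≥0∞) => (duhamel f₀ p w.2, duhamel g₀ q w.1))
    (P := fun w => Measurable (Function.uncurry w.1) ∧ Measurable (Function.uncurry w.2))
    (W := (U, V))
    (fun w w' hw => Prod.mk_le_mk.2 ⟨duhamel_mono f₀ hp.le hw.2, duhamel_mono g₀ hq.le hw.1⟩)
    ⟨measurable_const, measurable_const⟩
    (fun w hw => ⟨measurable_duhamel hf₀ p hw.2, measurable_duhamel hg₀ q hw.1⟩)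
    (fun w hw hmeas => by
      have hsup : ∀ {g : ℕ → E → ℝ → ℝ≥0∞}, (∀ n, Measurable (Function.uncurry (g n))) →
          Measurable (Function.uncurry (⨆ n, g n)) := fun hg => by
        simpa only [Function.uncurry_def, iSup_apply] using Measurable.iSup hg
      refine ⟨⟨?_, ?_⟩, Prod.ext ?_ ?_⟩
      · exact Prod.fst_iSup w ▸ hsup fun n => (hmeas n).1
      · exact Prod.snd_iSup w ▸ hsup fun n => (hmeas n).2
      · simp only [Prod.fst_iSup, Prod.snd_iSup]
        exact duhamel_iSup f₀ hp (fun n => (hmeas n).2) (monotone_snd.comp hw)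
      · simp only [Prod.fst_iSup, Prod.snd_iSup]
        exact duhamel_iSup g₀ hq (fun n => (hmeas n).1) (monotone_fst.comp hw))
    ⟨hU, hV⟩
  exact ⟨u, v, hle.1, hle.2, hu, hv, congrArg Prod.fst hfix, congrArg Prod.snd hfix⟩

/-! ### Powers of a decaying heat flow as supersolutions -/

lemma heatFlow_le_rpow_heatFlow {f₀ z : E → ℝ≥0∞} (hz : Measurable z) {a : ℝ} (ha : 0 < a)
    (ha1 : a ≤ 1) (hf₀ : ∀ y, f₀ y ≤ z y ^ a) (t : ℝ) (x : E) :
    heatFlow t f₀ x ≤ heatFlow t z x ^ a := by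
  rcases le_or_gt t 0 with ht | ht
  · simp [heatFlow_of_nonpos ht]
  · have := isProbabilityMeasure_heatMeasure ht x
    exact (heatFlow_mono hf₀).trans (lintegral_rpow_le_rpow_lintegral hz.aemeasurable ha ha1)

lemma setLIntegral_heatFlow_sub_const_mul_rpow {z : E → ℝ≥0∞} {c : ℝ≥0∞} (hc : c ≠ ⊤) {p : ℝ}
    (hp : 0 ≤ p) (a t : ℝ) (x : E) :
    ∫⁻ s in Set.Ioo 0 t, heatFlow (t - s) (fun y => (c * heatFlow s z y ^ a) ^ p) x =
      c ^ p * ∫⁻ s in Set.Ioo 0 t, heatFlow (t - s) (fun y => heatFlow s z y ^ (a * p)) x := by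
  have hcp : c ^ p ≠ ⊤ := ENNReal.rpow_ne_top_of_nonneg hp hc
  simp_rw [ENNReal.mul_rpow_of_nonneg _ _ hp, ← ENNReal.rpow_mul, heatFlow,
    lintegral_const_mul' _ _ hcp]

-- The smallness threshold makes the constant `2^p B^{1/m} / (m (e - a))` of the nonlinear term `1`;
-- the linear term contributes the other half of the factor `2`.
lemma exists_forall_duhamel_le {m p a a' : ℝ} (hm : 0 < m) (hp : 0 ≤ p) (ha : 0 < a) (ha1 : a < 1)
    (hscaling : a' * p = a + 1 / m) :
    ∃ B : ℝ, 0 < B ∧ ∀ z f₀ : E → ℝ≥0∞, Measurable z → HeatFlowDecay m B z →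
      (∀ y, f₀ y ≤ z y ^ a) → duhamel f₀ p (fun y s => 2 * heatFlow s z y ^ a') ≤
        fun x t => 2 * heatFlow t z x ^ a := by
  have hm' : 0 < 1 / m := one_div_pos.2 hm
  set e := min 1 (a + 1 / m)
  have hae : 0 < e - a := sub_pos.2 (lt_min ha1 (lt_add_of_pos_right a hm'))
  refine ⟨(m * (e - a) / 2 ^ p) ^ m, by positivity, fun z f₀ hz hdecay hf₀ x t => ?_⟩
  have hconst : (2 : ℝ≥0∞) ^ p *
      ENNReal.ofReal (((m * (e - a) / 2 ^ p) ^ m) ^ (1 / m) / (m * (e - a))) = 1 := by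
    rw [← ofReal_two_rpow, one_div, Real.rpow_rpow_inv (by positivity) hm.ne',
      ← ENNReal.ofReal_mul (by positivity), ENNReal.ofReal_eq_one]
    field_simp
  have hnonlinear : ∫⁻ s in Set.Ioo 0 t,
      heatFlow (t - s) (fun y => (2 * heatFlow s z y ^ a') ^ p) x ≤ heatFlow t z x ^ a := by
    rcases le_or_gt t 0 with ht | ht
    · simp [Set.Ioo_eq_empty_of_le ht]
    · grw [setLIntegral_heatFlow_sub_const_mul_rpow ENNReal.ofNat_ne_top hp, hscaling,
        hdecay.setLIntegral_heatFlow_sub_rpow_heatFlow_le (by positivity) hz hm ha.le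
          (sub_pos.1 hae) (min_le_left _ _) (min_le_right _ _) ht x, ← mul_assoc, hconst, one_mul]
  exact (add_le_add (heatFlow_le_rpow_heatFlow hz ha ha1.le hf₀ t x) hnonlinear).trans_eq
    (two_mul _).symm

/-- Uniform boundedness of a space-time function on every time interval `[τ, ∞)` with `τ > 0`. -/
def BddAwayFromZero {X : Type*} (u : X → ℝ → ℝ≥0∞) : Prop :=
  ∀ τ, 0 < τ → ∃ M : ℝ≥0∞, M ≠ ⊤ ∧ ∀ t, τ ≤ t → ∀ x, u x t ≤ M

lemma BddAwayFromZero.ne_top {X : Type*} {u : X → ℝ → ℝ≥0∞} (h : BddAwayFromZero u) {t : ℝ}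
    (ht : 0 < t) (x : X) : u x t ≠ ⊤ :=
  have ⟨_, hM, hle⟩ := h t ht
  ne_top_of_le_ne_top hM (hle t le_rfl x)

lemma HeatFlowDecay.bddAwayFromZero {m B a : ℝ} {z : E → ℝ≥0∞} (h : HeatFlowDecay m B z)
    (hm : 0 ≤ m) (hB : 0 ≤ B) (ha : 0 ≤ a) {c : ℝ≥0∞} (hc : c ≠ ⊤) {u : E → ℝ → ℝ≥0∞}
    (hu : ∀ x t, u x t ≤ c * heatFlow t z x ^ a) : BddAwayFromZero u := fun τ hτ => by
  refine ⟨c * ENNReal.ofReal (B * τ ^ (-m)) ^ a, by finiteness, fun t ht x => ?_⟩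
  have hpow := Real.rpow_le_rpow_of_nonpos hτ ht (neg_nonpos.2 hm)
  grw [hu x t, h t (hτ.trans_le ht) x, hpow]

end HeatSemigroup

/-! ### Solutions of the system -/

section Euclidean

variable {N : ℕ}

lemma heatS_eq_heatFlow {t : ℝ} (ht : 0 < t) (φ : Euc N → ℝ) (x : Euc N) :
    heatS N t φ x = heatFlow t (fun y => ENNReal.ofReal (φ y)) x := by
  rw [heatS, heatFlow_eq_lintegral_mul]
  refine lintegral_congr fun y => ?_
  rw [heatKernel, if_pos ht, finrank_euclideanSpace_fin, ENNReal.ofReal_mul (by positivity)]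

lemma BddAwayFromZero.locBdd_toReal {u : Euc N → ℝ → ℝ≥0∞} (h : BddAwayFromZero u) :
    LocBdd N ⊤ fun x t => (u x t).toReal := fun τ hτ _ => by
  obtain ⟨M, hM, hle⟩ := h τ hτ
  refine ⟨M.toReal, fun t ht _ => .of_forall fun x => ?_⟩
  rw [abs_of_nonneg ENNReal.toReal_nonneg]
  exact ENNReal.toReal_mono hM (hle t ht x)

lemma duhamel_eq_heatS_add {p : ℝ} (hp : 0 ≤ p) (u₀ : Euc N → ℝ) {v : Euc N → ℝ → ℝ≥0∞}
    (hv : BddAwayFromZero v) {t : ℝ} (ht : 0 < t) (x : Euc N) :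
    duhamel (fun y => ENNReal.ofReal (u₀ y)) p v x t = heatS N t u₀ x +
      ∫⁻ s in Set.Ioo 0 t, heatS N (t - s) (fun y => (v y s).toReal ^ p) x := by
  rw [duhamel, heatS_eq_heatFlow ht]
  congr 1
  refine setLIntegral_congr_fun measurableSet_Ioo fun s hs => ?_
  rw [heatS_eq_heatFlow (sub_pos.2 hs.2)]
  congr with y
  rw [← ENNReal.ofReal_rpow_of_nonneg ENNReal.toReal_nonneg hp,
    ENNReal.ofReal_toReal (hv.ne_top hs.1 y)]

lemma isSolSys_toReal {p q : ℝ} (hp : 0 ≤ p) (hq : 0 ≤ q) {u₀ v₀ : Euc N → ℝ}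
    {u v : Euc N → ℝ → ℝ≥0∞} (hu : Measurable (Function.uncurry u))
    (hv : Measurable (Function.uncurry v)) (hub : BddAwayFromZero u) (hvb : BddAwayFromZero v)
    (hufix : duhamel (fun y => ENNReal.ofReal (u₀ y)) p v = u)
    (hvfix : duhamel (fun y => ENNReal.ofReal (v₀ y)) q u = v) :
    IsSolSys N p q u₀ v₀ ⊤ (fun x t => (u x t).toReal) fun x t => (v x t).toReal := by
  refine ⟨⟨fun _ _ => ENNReal.toReal_nonneg, fun _ _ => ENNReal.toReal_nonneg, hu.ennreal_toReal,
    hv.ennreal_toReal, hub.locBdd_toReal, hvb.locBdd_toReal⟩, fun t ht _ =>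
    ⟨.of_forall fun x => ?_, .of_forall fun x => ?_⟩⟩
  · rw [ENNReal.ofReal_toReal (hub.ne_top ht x), ← duhamel_eq_heatS_add hp u₀ hvb ht, hufix]
  · rw [ENNReal.ofReal_toReal (hvb.ne_top ht x), ← duhamel_eq_heatS_add hq v₀ hub ht, hvfix]

theorem exists_isSolSys_of_heatFlowDecay {p q m a₁ a₂ : ℝ} (hm : 0 < m) (ha₁ : a₁ ∈ Set.Ioo 0 1)
    (ha₂ : a₂ ∈ Set.Ioo 0 1) (hscaling₁ : a₂ * p = a₁ + 1 / m)
    (hscaling₂ : a₁ * q = a₂ + 1 / m) :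
    ∃ B : ℝ, 0 < B ∧ ∀ (z : Euc N → ℝ≥0∞) (u₀ v₀ : Euc N → ℝ), Measurable z → Measurable u₀ →
      Measurable v₀ → HeatFlowDecay m B z → (∀ y, ENNReal.ofReal (u₀ y) ≤ z y ^ a₁) →
      (∀ y, ENNReal.ofReal (v₀ y) ≤ z y ^ a₂) →
      ∃ u v : Euc N → ℝ → ℝ, IsSolSys N p q u₀ v₀ ⊤ u v ∧
        ∀ t, 0 < t → ∀ x, ENNReal.ofReal (u x t) ≤ 2 * heatFlow t z x ^ a₁ ∧
          ENNReal.ofReal (v x t) ≤ 2 * heatFlow t z x ^ a₂ := by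
  have hm' : 0 < 1 / m := one_div_pos.2 hm
  have hp : 0 < p := pos_of_mul_pos_right (hscaling₁ ▸ add_pos ha₁.1 hm') ha₂.1.le
  have hq : 0 < q := pos_of_mul_pos_right (hscaling₂ ▸ add_pos ha₂.1 hm') ha₁.1.le
  obtain ⟨B₁, hB₁, hsuper₁⟩ :=
    exists_forall_duhamel_le (E := Euc N) hm hp.le ha₁.1 ha₁.2 hscaling₁
  obtain ⟨B₂, hB₂, hsuper₂⟩ :=
    exists_forall_duhamel_le (E := Euc N) hm hq.le ha₂.1 ha₂.2 hscaling₂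
  have hB : 0 < min B₁ B₂ := lt_min hB₁ hB₂
  refine ⟨min B₁ B₂, hB, fun z u₀ v₀ hz hu₀ hv₀ hdecay hu₀z hv₀z => ?_⟩
  obtain ⟨u, v, huU, hvV, hu, hv, hufix, hvfix⟩ := exists_duhamel_eq_le hp hq
    hu₀.ennreal_ofReal hv₀.ennreal_ofReal
    (hsuper₁ z _ hz (hdecay.mono (min_le_left _ _)) hu₀z)
    (hsuper₂ z _ hz (hdecay.mono (min_le_right _ _)) hv₀z)
  have hub : BddAwayFromZero u := hdecay.bddAwayFromZero hm.le hB.le ha₁.1.le (by finiteness) huU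
  have hvb : BddAwayFromZero v := hdecay.bddAwayFromZero hm.le hB.le ha₂.1.le (by finiteness) hvV
  refine ⟨_, _, isSolSys_toReal hp.le hq.le hu hv hub hvb hufix hvfix, fun t ht x => ?_⟩
  rw [ENNReal.ofReal_toReal (hub.ne_top ht x), ENNReal.ofReal_toReal (hvb.ne_top ht x)]
  exact ⟨huU x t, hvV x t⟩

/-! ### Weak Lebesgue data -/

lemma volume_lt_abs_rpow_le_wnorm {r : ℝ} (hr : 1 < r) (f : Euc N → ℝ) {l : ℝ} (hl : 0 < l) :
    volume {x | l < |f x| ^ r} ≤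
      wnorm N (ENNReal.ofReal r) f Set.univ ^ r / ENNReal.ofReal l := by
  have hr0 : 0 < r := one_pos.trans hr
  have hset : {x | l < |f x| ^ r} = {x ∈ Set.univ | l ^ r⁻¹ < |f x|} := by
    ext x
    simp only [Set.mem_ofPred_eq, Set.mem_univ, true_and]
    exact (Real.rpow_inv_lt_iff_of_pos hl.le (abs_nonneg _) hr0).symm
  have hsup : ENNReal.ofReal (l ^ r⁻¹) * volume {x | l < |f x| ^ r} ^ r⁻¹ ≤
      wnorm N (ENNReal.ofReal r) f Set.univ := by
    rw [wnorm, if_neg (by simp [hr.ne']), if_neg ENNReal.ofReal_ne_top,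
      ENNReal.toReal_ofReal hr0.le, one_div, hset]
    exact le_iSup₂ (f := fun (l : ℝ) (_ : 0 < l) => ENNReal.ofReal l *
      volume {x ∈ Set.univ | l < |f x|} ^ r⁻¹) (l ^ r⁻¹) (by positivity)
  rw [ENNReal.le_div_iff_mul_le (by simp [hl]) (by simp), mul_comm,
    ← ENNReal.rpow_inv_le_iff hr0, ENNReal.mul_rpow_of_nonneg _ _ (inv_nonneg.2 hr0.le),
    ENNReal.ofReal_rpow_of_pos hl]
  exact hsup

lemma volume_lt_rpow_add_rpow_le {r₁ r₂ δ : ℝ} (hr₁ : 1 < r₁) (hr₂ : 1 < r₂) (hδ1 : δ ≤ 1)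
    {f g : Euc N → ℝ} (hf : ∀ x, 0 ≤ f x) (hg : ∀ x, 0 ≤ g x)
    (h : wnorm N (ENNReal.ofReal r₁) f Set.univ + wnorm N (ENNReal.ofReal r₂) g Set.univ ≤
      ENNReal.ofReal δ) {l : ℝ} (hl : 0 < l) :
    volume {x | l < f x ^ r₁ + g x ^ r₂} ≤ ENNReal.ofReal (2 * δ / l) := by
  set A := wnorm N (ENNReal.ofReal r₁) f Set.univ
  set B := wnorm N (ENNReal.ofReal r₂) g Set.univ
  have hAB1 : A + B ≤ 1 := h.trans (ENNReal.ofReal_le_one.2 hδ1)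
  have hA : A ^ r₁ ≤ A := ENNReal.rpow_le_self_of_le_one (le_self_add.trans hAB1) hr₁.le
  have hB : B ^ r₂ ≤ B := ENNReal.rpow_le_self_of_le_one (le_add_self.trans hAB1) hr₂.le
  have hcover : {x | l < f x ^ r₁ + g x ^ r₂} ⊆
      {x | l / 2 < |f x| ^ r₁} ∪ {x | l / 2 < |g x| ^ r₂} := fun x hx => by
    simp only [Set.mem_union, Set.mem_ofPred_eq, abs_of_nonneg (hf x), abs_of_nonneg (hg x)] at hx ⊢
    by_contra! hle
    linarith [hle.1, hle.2]
  calc volume {x | l < f x ^ r₁ + g x ^ r₂}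
      ≤ A ^ r₁ / ENNReal.ofReal (l / 2) + B ^ r₂ / ENNReal.ofReal (l / 2) := by
        grw [hcover, measure_union_le, volume_lt_abs_rpow_le_wnorm hr₁ f (half_pos hl),
          volume_lt_abs_rpow_le_wnorm hr₂ g (half_pos hl)]
    _ ≤ ENNReal.ofReal δ / ENNReal.ofReal (l / 2) := by grw [← ENNReal.add_div, hA, hB, h]
    _ = ENNReal.ofReal (2 * δ / l) := by
        rw [← ENNReal.ofReal_div_of_pos (half_pos hl), div_div_eq_mul_div, mul_comm]

-- `κ` solves `((4π)^{-N/2} κ)^θ / (1 - θ) = B`.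
lemma exists_heatFlowDecay_of_wnorm_lt {r₁ r₂ θ B : ℝ} (hr₁ : 1 < r₁) (hr₂ : 1 < r₂) (hθ : 0 < θ)
    (hθ1 : θ < 1) (hB : 0 < B) :
    ∃ δ : ℝ, 0 < δ ∧ ∀ f g : Euc N → ℝ, Measurable f → Measurable g → (∀ x, 0 ≤ f x) →
      (∀ x, 0 ≤ g x) →
      wnorm N (ENNReal.ofReal r₁) f Set.univ + wnorm N (ENNReal.ofReal r₂) g Set.univ <
        ENNReal.ofReal δ →
      HeatFlowDecay (N * θ / 2) B fun y => ENNReal.ofReal ((f y ^ r₁ + g y ^ r₂) ^ θ) := by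
  have h1θ : 0 < 1 - θ := sub_pos.2 hθ1
  set κ := (4 * Real.pi) ^ ((N : ℝ) / 2) * ((1 - θ) * B) ^ θ⁻¹
  have hκ : 0 < κ := by positivity
  have hκB : ((4 * Real.pi) ^ (-(N : ℝ) / 2) * κ) ^ θ / (1 - θ) = B := by
    rw [neg_div, Real.rpow_neg (by positivity), inv_mul_cancel_left₀ (by positivity),
      Real.rpow_inv_rpow (by positivity) hθ.ne', mul_div_cancel_left₀ _ h1θ.ne']
  refine ⟨min 1 (κ / 2), by positivity, fun f g hf hg hf0 hg0 hsmall => ?_⟩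
  have htail : ∀ l, 0 < l → volume {y | l < f y ^ r₁ + g y ^ r₂} ≤ ENNReal.ofReal (κ / l) :=
    fun l hl => by
      grw [volume_lt_rpow_add_rpow_le hr₁ hr₂ (min_le_left _ _) hf0 hg0 hsmall.le hl,
        min_le_right, mul_div_cancel₀ _ two_ne_zero]
  have hdecay := heatFlowDecay_of_weak_tail (w := fun y => f y ^ r₁ + g y ^ r₂) (by fun_prop)
    (fun y => by have := hf0 y; have := hg0 y; positivity) hθ hθ1 hκ htail
  rwa [finrank_euclideanSpace_fin, hκB] at hdecay

lemma ofReal_le_ofReal_rpow_rpow {f w θ r : ℝ} (hf : 0 ≤ f) (hθ : 0 < θ) (hr : 0 < r)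
    (h : f ^ r ≤ w) : ENNReal.ofReal f ≤ ENNReal.ofReal (w ^ θ) ^ (1 / (r * θ)) := by
  have hw : 0 ≤ w := (Real.rpow_nonneg hf r).trans h
  rw [ENNReal.ofReal_rpow_of_nonneg (by positivity) (by positivity), ← Real.rpow_mul hw,
    show θ * (1 / (r * θ)) = r⁻¹ by field_simp]
  exact ENNReal.ofReal_le_ofReal ((Real.le_rpow_inv_iff_of_pos hf hw hr).2 h)

lemma ofReal_rpow_le_of_ofReal_le {u θ r : ℝ} {c Z : ℝ≥0∞} (hu : 0 ≤ u) (hr : 0 < r)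
    (h : ENNReal.ofReal u ≤ c * Z ^ (1 / (r * θ))) :
    ENNReal.ofReal (u ^ r) ≤ c ^ r * Z ^ (1 / θ) := by
  grw [← ENNReal.ofReal_rpow_of_nonneg hu hr.le, h, ENNReal.mul_rpow_of_nonneg _ _ hr.le,
    ← ENNReal.rpow_mul, show 1 / (r * θ) * r = 1 / θ by field_simp]

lemma one_div_mem_Ioo_of_one_lt {a : ℝ} (ha : 1 < a) : 1 / a ∈ Set.Ioo (0 : ℝ) 1 :=
  ⟨one_div_pos.2 (one_pos.trans ha), (div_lt_one (one_pos.trans ha)).2 ha⟩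

theorem exists_isSolSys_of_wnorm_lt (hN : 1 ≤ N) {p q r₁ r₂ θ : ℝ}
    (hscaling₁ : p / r₂ = 1 / r₁ + 2 / N) (hscaling₂ : q / r₁ = 1 / r₂ + 2 / N)
    (hθ : 0 < θ) (hθ1 : θ < 1) (hr₁θ : 1 < r₁ * θ) (hr₂θ : 1 < r₂ * θ) :
    ∃ δ : ℝ, 0 < δ ∧ ∀ u₀ v₀ : Euc N → ℝ, Measurable u₀ → Measurable v₀ →
      (∀ x, 0 ≤ u₀ x) → (∀ x, 0 ≤ v₀ x) →
      wnorm N (ENNReal.ofReal r₁) u₀ Set.univ + wnorm N (ENNReal.ofReal r₂) v₀ Set.univ <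
        ENNReal.ofReal δ →
      ∃ u v : Euc N → ℝ → ℝ, IsSolSys N p q u₀ v₀ ⊤ u v ∧ ∀ t : ℝ, 0 < t → ∀ x,
        ENNReal.ofReal (u x t ^ r₁ + v x t ^ r₂) ≤ ENNReal.ofReal (2 ^ r₁ + 2 ^ r₂) *
          heatS N t (fun y => (u₀ y ^ r₁ + v₀ y ^ r₂) ^ θ) x ^ (1 / θ) := by
  have hr₁ : 1 < r₁ := by nlinarith
  have hr₂ : 1 < r₂ := by nlinarith
  have exponent_eq : ∀ {c r r' : ℝ}, c / r' = 1 / r + 2 / N →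
      1 / (r' * θ) * c = 1 / (r * θ) + 1 / (N * θ / 2) := fun {c r r'} h => by
    calc 1 / (r' * θ) * c = c / r' / θ := by ring
      _ = 1 / (r * θ) + 1 / (N * θ / 2) := by rw [h]; field_simp
  obtain ⟨B, hB, hsol⟩ := exists_isSolSys_of_heatFlowDecay (N := N) (m := N * θ / 2)
    (by positivity) (one_div_mem_Ioo_of_one_lt hr₁θ) (one_div_mem_Ioo_of_one_lt hr₂θ)
    (exponent_eq hscaling₁) (exponent_eq hscaling₂)
  obtain ⟨δ, hδ, hdecay⟩ := exists_heatFlowDecay_of_wnorm_lt (N := N) hr₁ hr₂ hθ hθ1 hB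
  refine ⟨δ, hδ, fun u₀ v₀ hu₀m hv₀m hu₀ hv₀ hsmall => ?_⟩
  obtain ⟨u, v, huv, hbound⟩ := hsol _ u₀ v₀ (by fun_prop) hu₀m hv₀m
    (hdecay u₀ v₀ hu₀m hv₀m hu₀ hv₀ hsmall)
    (fun y => ofReal_le_ofReal_rpow_rpow (hu₀ y) hθ (by positivity)
      (le_add_of_nonneg_right (Real.rpow_nonneg (hv₀ y) _)))
    (fun y => ofReal_le_ofReal_rpow_rpow (hv₀ y) hθ (by positivity)
      (le_add_of_nonneg_left (Real.rpow_nonneg (hu₀ y) _)))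
  refine ⟨u, v, huv, fun t ht x => ?_⟩
  have hu : 0 ≤ u x t := huv.1.1 x t
  have hv : 0 ≤ v x t := huv.1.2.1 x t
  rw [heatS_eq_heatFlow ht, ENNReal.ofReal_add (by positivity) (by positivity),
    ENNReal.ofReal_add (by positivity) (by positivity), ofReal_two_rpow, ofReal_two_rpow, add_mul]
  exact add_le_add (ofReal_rpow_le_of_ofReal_le hu (by positivity) (hbound t ht x).1)
    (ofReal_rpow_le_of_ofReal_le hv (by positivity) (hbound t ht x).2)

end Euclidean

lemma div_critical_exponent_eq {n p q : ℝ} (hpq : 1 < p * q) :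
    p / (n / 2 * ((p * q - 1) / (q + 1))) = 1 / (n / 2 * ((p * q - 1) / (p + 1))) + 2 / n := by
  have hpq' : p * q - 1 ≠ 0 := (sub_pos.2 hpq).ne'
  calc p / (n / 2 * ((p * q - 1) / (q + 1))) = (p * q + p) / (p * q - 1) * (2 / n) := by
        simp only [div_eq_mul_inv, mul_inv, inv_inv]
        ring
    _ = ((p + 1) / (p * q - 1) + 1) * (2 / n) := by
        field_simp
        ring
    _ = 1 / (n / 2 * ((p * q - 1) / (p + 1))) + 2 / n := by
        simp only [div_eq_mul_inv, mul_inv, inv_inv]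
        ring

/-- Corollary 3.1: if `r₁* > 1` and `r₂* > 1`, there is `δ > 0` such that
small data in `L^{r₁*,∞} × L^{r₂*,∞}` yield a global-in-time solution of (S), with the bound
`0 ≤ u^{r₁*} + v^{r₂*} ≤ C [S(t)(u₀^{r₁*}+v₀^{r₂*})^{σ/r}]^{r/σ}` for some `1 < σ ≤ r`. -/
theorem statement12 (N : ℕ) (hN : 1 ≤ N) (p q : ℝ) (hp : 0 ≤ p) (hq : 0 ≤ q)
    (hpq : 1 < p * q) (r₁s r₂s : ℝ)
    (hr₁def : r₁s = (N : ℝ) / 2 * ((p * q - 1) / (p + 1)))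
    (hr₂def : r₂s = (N : ℝ) / 2 * ((p * q - 1) / (q + 1)))
    (hr₁ : 1 < r₁s) (hr₂ : 1 < r₂s) :
    ∃ δ : ℝ, 0 < δ ∧
      ∀ u₀ v₀ : Euc N → ℝ, Measurable u₀ → Measurable v₀ →
        (∀ x, 0 ≤ u₀ x) → (∀ x, 0 ≤ v₀ x) →
        wnorm N (ENNReal.ofReal r₁s) u₀ Set.univ +
            wnorm N (ENNReal.ofReal r₂s) v₀ Set.univ < ENNReal.ofReal δ →
        ∃ u v : Euc N → ℝ → ℝ, IsSolSys N p q u₀ v₀ ⊤ u v ∧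
          ∃ C σ r : ℝ, 0 < C ∧ 1 < σ ∧ σ ≤ r ∧ r ≤ min r₁s r₂s ∧
            ∀ t : ℝ, 0 < t →
              ∀ᵐ x ∂(volume : Measure (Euc N)),
                ENNReal.ofReal (u x t ^ r₁s + v x t ^ r₂s) ≤
                  ENNReal.ofReal C *
                    heatS N t (fun y => (u₀ y ^ r₁s + v₀ y ^ r₂s) ^ (σ / r)) x ^ (r / σ) := by
  have hscaling₁ : p / r₂s = 1 / r₁s + 2 / N := by
    rw [hr₁def, hr₂def, div_critical_exponent_eq hpq]
  have hscaling₂ : q / r₁s = 1 / r₂s + 2 / N := by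
    rw [hr₁def, hr₂def, mul_comm p q, div_critical_exponent_eq (by rwa [mul_comm])]
  set r := min r₁s r₂s
  have hr : 1 < r := lt_min hr₁ hr₂
  obtain ⟨σ, hσ1, hσr⟩ := exists_between hr
  have hσ : 1 < r * (σ / r) := by rwa [mul_div_cancel₀ _ (by positivity)]
  obtain ⟨δ, hδ, hsol⟩ := exists_isSolSys_of_wnorm_lt hN hscaling₁ hscaling₂
    (by positivity : 0 < σ / r) ((div_lt_one (by positivity)).2 hσr)
    (hσ.trans_le (by gcongr; exact min_le_left _ _))
    (hσ.trans_le (by gcongr; exact min_le_right _ _))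
  refine ⟨δ, hδ, fun u₀ v₀ hu₀m hv₀m hu₀ hv₀ hsmall => ?_⟩
  obtain ⟨u, v, huv, hbound⟩ := hsol u₀ v₀ hu₀m hv₀m hu₀ hv₀ hsmall
  refine ⟨u, v, huv, 2 ^ r₁s + 2 ^ r₂s, σ, r, by positivity, hσ1, hσr.le, le_rfl, fun t ht =>
    .of_forall fun x => ?_⟩
  rw [← one_div_div σ r]
  exact hbound t ht x
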